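/- Non-negative Cycle Lemma: there exists a polynomial P with natural-number coefficients such that for every 2-VASS V with n control states and norm M, every run of V from a (0,0)-configuration to a target configuration of norm larger than P(nM)ⁿ contains a configuration that enables a semi-positive cycle of length at most P(nM). -/

import Mathlib

/-- Integer vectors in the plane. -/
abbrev Vec2 : Type := ℤ × ℤ

/-- The norm of a vector: the maximum of the absolute values of its coordinates. -/
def vnorm (v : Vec2) : ℕ := max v.1.natAbs v.2.natAbs

/-- A vector is positive if both coordinates are positive. -/
def Pos (v : Vec2) : Prop := 0 < v.1 ∧ 0 < v.2

/-- A vector is semi-positive if both coordinates are nonnegative and one is positive. -/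
def SemiPos (v : Vec2) : Prop := 0 ≤ v.1 ∧ 0 ≤ v.2 ∧ (0 < v.1 ∨ 0 < v.2)

/-- A vector is vertical if it is of the form (0, a) with a > 0. -/
def Vert (v : Vec2) : Prop := v.1 = 0 ∧ 0 < v.2

/-- A vector is horizontal if it is of the form (a, 0) with a > 0. -/
def Horiz (v : Vec2) : Prop := 0 < v.1 ∧ v.2 = 0

/-- Embedding of integer vectors into the rational plane. -/
def toQ (v : Vec2) : ℚ × ℚ := ((v.1 : ℚ), (v.2 : ℚ))

/-- The half-line (ray) ℚ≥0 · x generated by a rational vector x. -/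
def rayQ (x : ℚ × ℚ) : Set (ℚ × ℚ) := {z | ∃ a : ℚ, 0 ≤ a ∧ z = a • x}

/-- The cone of a finite list of integer vectors: all nonnegative rational
linear combinations. -/
def Cone (vs : List Vec2) : Set (ℚ × ℚ) :=
  {x | ∃ a : Fin vs.length → ℚ, (∀ i, 0 ≤ a i) ∧ x = ∑ i, a i • toQ (vs.get i)}

/-- The sequential cone: nonnegative rational combinations all of whose
partial sums are in the nonnegative orthant. -/
def SeqCone (vs : List Vec2) : Set (ℚ × ℚ) :=
  {x | ∃ a : Fin vs.length → ℚ, (∀ i, 0 ≤ a i) ∧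
    (∀ k : ℕ, k ≤ vs.length →
      0 ≤ ∑ i : Fin vs.length, if (i : ℕ) < k then a i • toQ (vs.get i) else 0) ∧
    x = ∑ i, a i • toQ (vs.get i)}

/-- Two integer vectors are colinear if they generate the same half-line. -/
def Colinear (v w : Vec2) : Prop := rayQ (toQ v) = rayQ (toQ w)

/-- The clockwise relation on nonnegative vectors:
`Clk v u` iff u lies strictly clockwise from v. -/
def Clk (v u : Vec2) : Prop := 0 < v.2 * u.1 - v.1 * u.2

/-- Projection of a vector on coordinate `j` (`Fin 2` indexes the two coordinates). -/
def proj (j : Fin 2) (v : Vec2) : ℤ := if j = 0 then v.1 else v.2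

/-! ### 2-dimensional vector addition systems with states (2-VASS) -/

/-- A transition of a 2-VASS with control states `Fin n`:
a source state, an effect vector, and a target state. -/
abbrev Transition (n : ℕ) : Type := Fin n × Vec2 × Fin n

/-- A 2-VASS with control states `Fin n` is a finite set of transitions. -/
abbrev VASS (n : ℕ) : Type := Finset (Transition n)

/-- The norm of a 2-VASS: the largest norm of an effect of a transition. -/
def vassNorm {n : ℕ} (V : VASS n) : ℕ := V.sup (fun t => vnorm t.2.1)

/-- The effect of a sequence of transitions: the sum of the individual effects. -/
def effect {n : ℕ} (π : List (Transition n)) : Vec2 := (π.map (fun t => t.2.1)).sum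

/-- A path of `V`: a sequence of transitions of `V` in which
consecutive control states match. -/
def IsPath {n : ℕ} (V : VASS n) (π : List (Transition n)) : Prop :=
  (∀ t ∈ π, t ∈ V) ∧ π.Chain' (fun s t => s.2.2 = t.1)

/-- The path `π` starts at control state `q` (vacuously true for the empty path). -/
def startsAt {n : ℕ} (π : List (Transition n)) (q : Fin n) : Prop :=
  ∀ t ∈ π.head?, t.1 = q

/-- The control state after the first `i` transitions of `π`, for a path
starting at control state `q`. -/
def stateAt {n : ℕ} (π : List (Transition n)) (q : Fin n) (i : ℕ) : Fin n :=
  (((π.take i).getLast?).map (fun t => t.2.2)).getD q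

/-- The final control state of a path `π` starting at control state `q`. -/
def endState {n : ℕ} (π : List (Transition n)) (q : Fin n) : Fin n := stateAt π q π.length

/-- The counter values after the first `i` transitions of `π`, starting from
counter values `u`. -/
def vecAt {n : ℕ} (π : List (Transition n)) (u : Vec2) (i : ℕ) : Vec2 :=
  u + effect (π.take i)

/-- The path `π` is enabled in the configuration `(q, u)`: it starts at `q`
and all intermediate counter values are nonnegative. -/
def Enabled {n : ℕ} (π : List (Transition n)) (q : Fin n) (u : Vec2) : Prop :=
  startsAt π q ∧ ∀ i ≤ π.length, 0 ≤ vecAt π u i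

/-- For `j ∈ {1,2}`, the path `π` is `{j}`-enabled in the configuration `(q, u)`:
it starts at `q` and the `j`-th coordinate of all intermediate counter values is
nonnegative. -/
def JEnabled {n : ℕ} (π : List (Transition n)) (q : Fin n) (u : Vec2) (j : Fin 2) : Prop :=
  startsAt π q ∧ ∀ i ≤ π.length, 0 ≤ proj j (vecAt π u i)

/-- A run of `V`: a path of `V` enabled in the configuration `(q, u)`.
Its source is `(q, u)`, its target is `(endState π q, vecAt π u π.length)`,
and its configurations are `(stateAt π q i, vecAt π u i)` for `i ≤ π.length`. -/
def IsRun {n : ℕ} (V : VASS n) (π : List (Transition n)) (q : Fin n) (u : Vec2) : Prop :=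
  IsPath V π ∧ Enabled π q u

/-- A (0,0)-run of `V`: a run whose source and target counter values are `(0,0)`. -/
def IsZeroRun {n : ℕ} (V : VASS n) (π : List (Transition n)) (q : Fin n) : Prop :=
  IsRun V π q 0 ∧ effect π = 0

/-- A cycle of `V`: a nonempty path of `V` whose starting and ending control
states coincide. -/
def IsCycle {n : ℕ} (V : VASS n) (γ : List (Transition n)) : Prop :=
  IsPath V γ ∧ γ ≠ [] ∧ γ.head?.map (fun t => t.1) = γ.getLast?.map (fun t => t.2.2)

/-!
A run along which no short semi-positive cycle is enabled grows by at most a polynomial factor per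
control state. This is shown by induction on the set `S` of control states that the run may visit.
If `S` is not strongly connected, the run passes at most once into a closed proper part of `S`, and
the growth factors of the two parts multiply. Otherwise, consider the cone spanned by the effects of
the short cycles in `S`.

* If it meets the open quadrant, every state of `S` lies on a short cycle with positive effect.
  Whenever one coordinate is large, the other one must then be small, so the run moves inside
  belts of bounded width along the axes. Projecting away the bounded coordinate leaves a finite
  graph whose short cycles cannot increase the large one, as they would be semi-positive.
* If it lies below a line of negative slope, a linear form with small positive coefficients does
  not increase along short cycles, which bounds it along the run.
* If it meets the closed quadrant along one axis only, some short cycle through a state `r`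
  increases the coordinate of this axis, and no short cycle increases the other coordinate. As long
  as the latter is large, the run must avoid `r` whenever the former is large, and induction applies
  to `S \ {r}`; once it is small, it remains small and the run moves inside a belt.
-/

/-! ### Walks in edge-labelled graphs -/

section Walks

variable {α β τ : Type*} {R : α → τ → α → Prop} {s s' : Set α} {T : Finset α} {a b c : α}
  {l l₁ l₂ : List τ}

/-- Walks in the graph on `α` whose edges, labelled by `τ`, are given by the relation `R`:
`Walk R s a l b` says that `l` is the list of labels of a walk from `a` to `b` all of whose
vertices, endpoints included, lie in `s`. -/
inductive Walk (R : α → τ → α → Prop) (s : Set α) : α → List τ → α → Prop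
  | nil {a : α} (ha : a ∈ s) : Walk R s a [] a
  | cons {a : α} {t : τ} {b : α} {l : List τ} {c : α} (ha : a ∈ s) (hab : R a t b)
      (hbc : Walk R s b l c) : Walk R s a (t :: l) c

namespace Walk

lemma source_mem (h : Walk R s a l b) : a ∈ s := by
  cases h <;> assumption

lemma target_mem (h : Walk R s a l b) : b ∈ s := by
  induction h with
  | nil ha => exact ha
  | cons _ _ _ ih => exact ih

lemma forall_label {p : τ → Prop} (hp : ∀ a t b, R a t b → p t) (h : Walk R s a l b) :
    ∀ t ∈ l, p t := by
  induction h with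
  | nil => simp
  | cons _ hab _ ih => exact List.forall_mem_cons.2 ⟨hp _ _ _ hab, ih⟩

lemma append (h₁ : Walk R s a l₁ b) (h₂ : Walk R s b l₂ c) : Walk R s a (l₁ ++ l₂) c := by
  induction h₁ with
  | nil => exact h₂
  | cons ha hab _ ih => exact cons ha hab (ih h₂)

lemma exists_of_append (h : Walk R s a (l₁ ++ l₂) c) :
    ∃ b, Walk R s a l₁ b ∧ Walk R s b l₂ c := by
  induction l₁ generalizing a with
  | nil => exact ⟨a, nil h.source_mem, h⟩
  | cons t l ih =>
    cases h with
    | cons ha hab h =>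
      obtain ⟨d, h₁, h₂⟩ := ih h
      exact ⟨d, cons ha hab h₁, h₂⟩

lemma exists_take (h : Walk R s a l b) (i : ℕ) :
    ∃ c, Walk R s a (l.take i) c ∧ Walk R s c (l.drop i) b :=
  exists_of_append ((List.take_append_drop i l).symm ▸ h)

lemma replicate (h : Walk R s a l a) (k : ℕ) : Walk R s a (List.replicate k l).flatten a := by
  induction k with
  | zero => exact nil h.source_mem
  | succ k ih => exact h.append ih

lemma map {R' : β → τ → β → Prop} {s' : Set β} (f : α → β)
    (hR : ∀ a t b, R a t b → R' (f a) t (f b)) (hs : Set.MapsTo f s s') (h : Walk R s a l b) :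
    Walk R' s' (f a) l (f b) := by
  induction h with
  | nil ha => exact nil (hs ha)
  | cons ha hab _ ih => exact cons (hs ha) (hR _ _ _ hab) ih

lemma mono (hs : s ⊆ s') (h : Walk R s a l b) : Walk R s' a l b :=
  h.map id (fun _ _ _ => id) hs

lemma of_forall_reachable (h : Walk R s a l b) (hs : ∀ l c, Walk R s a l c → c ∈ s') :
    Walk R s' a l b := by
  induction h with
  | nil ha => exact nil (hs _ _ (nil ha))
  | cons ha hab _ ih =>
    exact cons (hs _ _ (nil ha)) hab (ih fun l c h => hs _ c (cons ha hab h))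

lemma avoids_or_exists_first (P : Set α) (h : Walk R s a l b) :
    Walk R (s \ P) a l b ∨ ∃ c ∈ P, ∃ l₁ l₂, l = l₁ ++ l₂ ∧ Walk R s a l₁ c ∧ Walk R s c l₂ b ∧
      (c = a ∨ ∃ d t l₀, Walk R (s \ P) a l₀ d ∧ R d t c) := by
  induction h with
  | @nil a ha =>
    by_cases haP : a ∈ P
    · exact .inr ⟨a, haP, [], [], rfl, nil ha, nil ha, .inl rfl⟩
    · exact .inl (nil ⟨ha, haP⟩)
  | @cons a t d l b ha hab h ih =>
    by_cases haP : a ∈ P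
    · exact .inr ⟨a, haP, [], _, rfl, nil ha, cons ha hab h, .inl rfl⟩
    obtain h' | ⟨c, hc, l₁, l₂, rfl, h₁, h₂, hfirst⟩ := ih
    · exact .inl (cons ⟨ha, haP⟩ hab h')
    · refine .inr ⟨c, hc, t :: l₁, l₂, rfl, cons ha hab h₁, h₂, .inr ?_⟩
      obtain rfl | ⟨e, u, l₀, h₀, hec⟩ := hfirst
      · exact ⟨a, t, [], nil ⟨ha, haP⟩, hab⟩
      · exact ⟨e, u, t :: l₀, cons ⟨ha, haP⟩ hab h₀, hec⟩

lemma avoids_or_exists_last (P : Set α) (h : Walk R s a l b) :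
    Walk R (s \ P) a l b ∨ ∃ c ∈ P, ∃ l₁, Walk R s a l₁ c ∧
      (c = b ∨ ∃ t d l₂, R c t d ∧ Walk R (s \ P) d l₂ b) := by
  induction h with
  | @nil a ha =>
    by_cases haP : a ∈ P
    · exact .inr ⟨a, haP, [], nil ha, .inl rfl⟩
    · exact .inl (nil ⟨ha, haP⟩)
  | @cons a t d l b ha hab _ ih =>
    obtain h' | ⟨c, hc, l₁, h₁, hlast⟩ := ih
    · by_cases haP : a ∈ P
      · exact .inr ⟨a, haP, [], nil ha, .inr ⟨t, d, l, hab, h'⟩⟩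
      · exact .inl (cons ⟨ha, haP⟩ hab h')
    · exact .inr ⟨c, hc, t :: l₁, cons ha hab h₁, hlast⟩

lemma exists_cycle (h : Walk R T a l b) (hl : T.card ≤ l.length) :
    ∃ c l₁ l₂ l₃, l = l₁ ++ l₂ ++ l₃ ∧ l₂ ≠ [] ∧
      Walk R T a l₁ c ∧ Walk R T c l₂ c ∧ Walk R T c l₃ b := by
  classical
  induction l generalizing a T with
  | nil => exact absurd (Finset.card_pos.2 ⟨a, h.source_mem⟩) (not_lt.2 hl)
  | cons t l ih =>
    cases h with
    | cons ha hab h =>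
      obtain h' | ⟨c, rfl, l₂, l₃, rfl, h₂, h₃, -⟩ := h.avoids_or_exists_first {a}
      · rw [← Finset.coe_erase] at h'
        have hcard : (T.erase a).card ≤ l.length := by
          rw [Finset.card_erase_of_mem ha]
          exact Nat.sub_le_of_le_add hl
        obtain ⟨c, l₁, l₂, l₃, rfl, hne, h₁, h₂, h₃⟩ := ih h' hcard
        have hsub : ((T.erase a : Finset α) : Set α) ⊆ T := T.erase_subset a
        exact ⟨c, t :: l₁, l₂, l₃, rfl, hne, cons ha hab (h₁.mono hsub), h₂.mono hsub,
          h₃.mono hsub⟩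
      · exact ⟨c, [], t :: l₂, l₃, rfl, List.cons_ne_nil _ _, nil ha, cons ha hab h₂, h₃⟩

lemma exists_short_cycle (h : Walk R T a l b) (hl : T.card ≤ l.length) :
    ∃ c l₁ l₂ l₃, l = l₁ ++ l₂ ++ l₃ ∧ l₂ ≠ [] ∧ l₂.length ≤ T.card ∧
      Walk R T a l₁ c ∧ Walk R T c l₂ c ∧ Walk R T c l₃ b := by
  obtain ⟨d, h₁, h₂⟩ := h.exists_take T.card
  obtain ⟨c, l₁, l₂, l₃, heq, hne, hw₁, hw₂, hw₃⟩ := h₁.exists_cycle (by simp [hl])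
  have hlen := congrArg List.length heq
  simp only [List.length_take, List.length_append] at hlen
  refine ⟨c, l₁, l₂, l₃ ++ l.drop T.card, ?_, hne, by omega, hw₁, hw₂, hw₃.append h₂⟩
  rw [← List.append_assoc, ← heq, List.take_append_drop]

lemma cycle_induction {motive : List τ → Prop}
    (short : ∀ l, Walk R T a l b → l.length ≤ T.card → motive l)
    (insert : ∀ c l₁ l₂ l₃, Walk R T c l₂ c → l₂.length ≤ T.card → motive (l₁ ++ l₃) →
      motive (l₁ ++ l₂ ++ l₃))
    (h : Walk R T a l b) : motive l := by
  induction hk : l.length using Nat.strong_induction_on generalizing l with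
  | _ k ih =>
    obtain hl | hl := le_or_gt T.card l.length
    · obtain ⟨c, l₁, l₂, l₃, rfl, hne, hlen, h₁, h₂, h₃⟩ := h.exists_short_cycle hl
      refine insert c l₁ l₂ l₃ h₂ hlen (ih (l₁ ++ l₃).length ?_ (h₁.append h₃) rfl)
      have := List.length_pos_iff.2 hne
      simp only [List.length_append] at hk ⊢
      omega
    · exact short l h hl.le

lemma exists_length_le_card (h : Walk R T a l b) : ∃ l', Walk R T a l' b ∧ l'.length ≤ T.card :=
  h.cycle_induction (motive := fun _ => ∃ l', Walk R T a l' b ∧ l'.length ≤ T.card)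
    (fun l hl hlen => ⟨l, hl, hlen⟩) fun _ _ _ _ _ _ => id

lemma sum_map_le {M : Type*} [AddCommMonoid M] [PartialOrder M] [IsOrderedAddMonoid M]
    {w : τ → M} {W : M} (hW : 0 ≤ W) (hw : ∀ a t b, R a t b → w t ≤ W)
    (hcycle : ∀ c l, Walk R T c l c → l.length ≤ T.card → (l.map w).sum ≤ 0)
    (h : Walk R T a l b) : (l.map w).sum ≤ T.card • W := by
  refine h.cycle_induction (motive := fun l => (l.map w).sum ≤ T.card • W)
    (fun l hl hlen => ?_) fun c l₁ l₂ l₃ hl₂ hlen ih => ?_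
  · calc (l.map w).sum ≤ (l.map w).length • W :=
          List.sum_le_card_nsmul _ _ (by simpa using hl.forall_label hw)
      _ ≤ T.card • W := nsmul_le_nsmul_left hW (by simpa using hlen)
  · calc ((l₁ ++ l₂ ++ l₃).map w).sum = (l₂.map w).sum + ((l₁ ++ l₃).map w).sum := by
          simp only [List.map_append, List.sum_append]; abel
      _ ≤ 0 + T.card • W := add_le_add (hcycle c l₂ hl₂ hlen) ih
      _ = T.card • W := zero_add _

end Walk

/-- The subgraph induced on `s` is strongly connected: walks inside `s` lead from any vertex of
`s` to any other. -/
def StronglyConnected (R : α → τ → α → Prop) (s : Set α) : Prop :=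
  ∀ a ∈ s, ∀ b ∈ s, ∃ l, Walk R s a l b

lemma exists_closed_of_not_stronglyConnected {S : Finset α}
    (h : ¬ StronglyConnected R (S : Set α)) :
    ∃ T ⊂ S, T.Nonempty ∧ ∀ a ∈ T, ∀ l b, Walk R S a l b → b ∈ T := by
  classical
  simp only [StronglyConnected, not_forall] at h
  obtain ⟨a, ha, b, hb, hab⟩ := h
  refine ⟨{c ∈ S | ∃ l, Walk R S a l c}, ?_, ⟨a, by simpa using ⟨ha, [], Walk.nil ha⟩⟩, ?_⟩
  · exact Finset.filter_ssubset.2 ⟨b, hb, hab⟩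
  · intro c hc l d hl
    obtain ⟨-, l', hl'⟩ := Finset.mem_filter.1 hc
    exact Finset.mem_filter.2 ⟨hl.target_mem, _, hl'.append hl⟩

end Walks

/-! ### Coordinates and norms -/

section Coordinates

variable {u v : Vec2}

/-- The coordinate `proj j` as a homomorphism. The other coordinate is `projHom j.rev`, which lets
statements treat the two axes symmetrically. -/
def projHom (j : Fin 2) : Vec2 →+ ℤ where
  toFun := proj j
  map_zero' := by simp [proj]
  map_add' u v := by simp only [proj]; split_ifs <;> rfl

@[simp] lemma projHom_zero_apply (v : Vec2) : projHom 0 v = v.1 := rfl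

@[simp] lemma projHom_one_apply (v : Vec2) : projHom 1 v = v.2 := rfl

lemma forall_fin_two_iff_rev {p : Fin 2 → Prop} (j : Fin 2) : (∀ k, p k) ↔ p j ∧ p j.rev := by
  fin_cases j
  · exact Fin.forall_fin_two
  · exact Fin.forall_fin_two.trans and_comm

lemma nonneg_iff_forall_projHom : 0 ≤ v ↔ ∀ j, 0 ≤ projHom j v := by
  simp [Fin.forall_fin_two, Prod.le_def]

lemma pos_iff_forall_projHom : Pos v ↔ ∀ j, 0 < projHom j v := by
  simp [Fin.forall_fin_two, Pos]

lemma semiPos_of_pos (h : Pos v) : SemiPos v :=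
  ⟨h.1.le, h.2.le, .inl h.1⟩

lemma semiPos_of_projHom {j : Fin 2} (hj : 0 < projHom j v) (hj' : 0 ≤ projHom j.rev v) :
    SemiPos v := by
  fin_cases j
  · exact ⟨le_of_lt hj, hj', .inl hj⟩
  · exact ⟨hj', le_of_lt hj, .inr hj⟩

lemma abs_projHom_le_vnorm (j : Fin 2) (v : Vec2) : |projHom j v| ≤ vnorm v := by
  fin_cases j <;> simp [vnorm]

lemma projHom_le_vnorm (j : Fin 2) (v : Vec2) : projHom j v ≤ vnorm v :=
  (le_abs_self _).trans (abs_projHom_le_vnorm j v)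

lemma neg_vnorm_le_projHom (j : Fin 2) (v : Vec2) : -(vnorm v : ℤ) ≤ projHom j v :=
  (abs_le.1 (abs_projHom_le_vnorm j v)).1

lemma vnorm_le_iff_of_nonneg (hv : 0 ≤ v) {N : ℤ} :
    (vnorm v : ℤ) ≤ N ↔ ∀ j, projHom j v ≤ N := by
  simp [vnorm, Fin.forall_fin_two, abs_of_nonneg hv.1, abs_of_nonneg hv.2]

lemma vnorm_add_le (u v : Vec2) : vnorm (u + v) ≤ vnorm u + vnorm v := by
  simp only [vnorm, Prod.fst_add, Prod.snd_add]
  omega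

lemma pos_add_nsmul_of_vnorm_lt {N : ℕ} (hv : Pos v) (hu : vnorm u < N) : Pos (u + N • v) := by
  rw [pos_iff_forall_projHom] at hv ⊢
  intro j
  rw [map_add, map_nsmul, nsmul_eq_mul]
  have := hv j
  have := neg_vnorm_le_projHom j u
  zify at hu
  nlinarith

end Coordinates

/-! ### The cone of a bounded set of vectors -/

section Cones

variable {E : Set Vec2} {K N : ℕ}

/-- Two vectors of `E`, taken with multiplicities at most `N`, sum up to a positive vector. -/
def HasPosCombination (E : Set Vec2) (N : ℕ) : Prop :=
  ∃ c ∈ E, ∃ d ∈ E, ∃ i ≤ N, ∃ j ≤ N, Pos (i • c + j • d)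

lemma projHom_rev_nonpos_of_axis (hE : ∀ v ∈ E, vnorm v ≤ K) (hpos : ¬ HasPosCombination E (K + 1))
    {c : Vec2} (hc : c ∈ E) {j : Fin 2} (hcj : 0 < projHom j c) (hcj' : projHom j.rev c = 0)
    {v : Vec2} (hv : v ∈ E) : projHom j.rev v ≤ 0 := by
  by_contra! hvj
  refine hpos ⟨c, hc, v, hv, K + 1, le_rfl, 1, by omega, ?_⟩
  rw [pos_iff_forall_projHom, forall_fin_two_iff_rev j]
  simp only [map_add, map_nsmul]
  simp only [nsmul_eq_mul, hcj', Nat.cast_one, one_mul, mul_zero, zero_add]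
  refine ⟨?_, hvj⟩
  have hvK : (vnorm v : ℤ) ≤ K := by exact_mod_cast hE v hv
  have := neg_vnorm_le_projHom j v
  push_cast
  nlinarith

/-- The line through the vector of greatest slope among those pointing to the right. -/
lemma exists_line_of_fst_pos (hE : ∀ v ∈ E, vnorm v ≤ K) (hpos : ¬ HasPosCombination E (2 * K))
    (haxis : ∀ v ∈ E, ¬ Horiz v) (hright : ∃ c ∈ E, 0 < c.1) :
    ∃ a ∈ Set.Icc (1 : ℤ) K, ∃ b ∈ Set.Icc (1 : ℤ) K, ∀ v ∈ E, a * v.1 + b * v.2 ≤ 0 := by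
  have hbox : ∀ v ∈ E, |v.1| ≤ (K : ℤ) ∧ |v.2| ≤ (K : ℤ) := fun v hv => by
    have hvK : (vnorm v : ℤ) ≤ K := by exact_mod_cast hE v hv
    exact ⟨(abs_projHom_le_vnorm 0 v).trans hvK, (abs_projHom_le_vnorm 1 v).trans hvK⟩
  have hfin : {c ∈ E | 0 < c.1}.Finite :=
    (Set.finite_Icc ((-K, -K) : Vec2) (K, K)).subset fun c hc =>
      have h := hbox c hc.1
      ⟨⟨(abs_le.1 h.1).1, (abs_le.1 h.2).1⟩, ⟨(abs_le.1 h.1).2, (abs_le.1 h.2).2⟩⟩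
  obtain ⟨c, ⟨hc, hc₁⟩, hmax⟩ :=
    Set.exists_max_image {c ∈ E | 0 < c.1} (fun c => (c.2 : ℚ) / c.1) hfin hright
  have hcK := hbox c hc
  simp only [abs_le] at hcK
  have hc₂ : c.2 < 0 := by
    refine lt_of_le_of_ne (not_lt.1 fun hc₂ => ?_) fun hc₂ => haxis c hc ⟨hc₁, hc₂⟩
    exact hpos ⟨c, hc, c, hc, 1, by omega, 0, by omega, by simpa using ⟨hc₁, hc₂⟩⟩
  refine ⟨-c.2, ⟨by omega, by omega⟩, c.1, ⟨by omega, by omega⟩, fun v hv => ?_⟩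
  have hvK := hbox v hv
  simp only [abs_le] at hvK
  obtain hv₁ | hv₁ := lt_or_ge 0 v.1
  · have hslope := hmax v ⟨hv, hv₁⟩
    rw [div_le_div_iff₀ (by exact_mod_cast hv₁) (by exact_mod_cast hc₁)] at hslope
    have : v.2 * c.1 ≤ c.2 * v.1 := by exact_mod_cast hslope
    linarith
  obtain hv₂ | hv₂ := le_or_gt v.2 0
  · nlinarith
  by_contra! hlt
  -- Both coordinates of this combination equal the determinant of `c` and `v`.
  refine hpos ⟨c, hc, v, hv, (v.2 - v.1).toNat, by omega, (c.1 - c.2).toNat, by omega, ?_⟩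
  have hi : ((v.2 - v.1).toNat : ℤ) = v.2 - v.1 := Int.toNat_of_nonneg (by omega)
  have hj : ((c.1 - c.2).toNat : ℤ) = c.1 - c.2 := Int.toNat_of_nonneg (by omega)
  simp only [Pos, Prod.fst_add, Prod.snd_add, Prod.smul_fst, Prod.smul_snd]
  simp only [nsmul_eq_mul, hi, hj]
  constructor <;> linarith

lemma exists_line_of_fst_nonpos (hE : ∀ v ∈ E, vnorm v ≤ K) (hK : 1 ≤ K)
    (haxis : ∀ v ∈ E, ¬ Vert v) (hleft : ∀ v ∈ E, v.1 ≤ 0) :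
    ∃ a ∈ Set.Icc (1 : ℤ) K, ∃ b ∈ Set.Icc (1 : ℤ) K, ∀ v ∈ E, a * v.1 + b * v.2 ≤ 0 := by
  have hK' : (1 : ℤ) ≤ K := by exact_mod_cast hK
  refine ⟨K, ⟨hK', le_rfl⟩, 1, ⟨le_rfl, hK'⟩, fun v hv => ?_⟩
  have hvK : (vnorm v : ℤ) ≤ K := by exact_mod_cast hE v hv
  have hv₂ : v.2 ≤ vnorm v := projHom_le_vnorm 1 v
  obtain hv₁ | hv₁ := (hleft v hv).lt_or_eq
  · nlinarith
  · have : ¬ 0 < v.2 := fun h => haxis v hv ⟨hv₁, h⟩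
    nlinarith

/-- Either the cone of `E` meets the open quadrant, or it meets the closed quadrant along exactly
one axis, or it is separated from the quadrant by a line of negative slope. -/
lemma cone_trichotomy (hE : ∀ v ∈ E, vnorm v ≤ K) (hK : 1 ≤ K) :
    HasPosCombination E (2 * K) ∨
    (∃ j, (∃ c ∈ E, 0 < projHom j c ∧ projHom j.rev c = 0) ∧ ∀ v ∈ E, projHom j.rev v ≤ 0) ∨
    ∃ a ∈ Set.Icc (1 : ℤ) K, ∃ b ∈ Set.Icc (1 : ℤ) K, ∀ v ∈ E, a * v.1 + b * v.2 ≤ 0 := by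
  refine or_iff_not_imp_left.2 fun hpos => or_iff_not_imp_left.2 fun haxis => ?_
  have hpos' : ¬ HasPosCombination E (K + 1) := fun ⟨c, hc, d, hd, i, hi, j, hj, h⟩ =>
    hpos ⟨c, hc, d, hd, i, by omega, j, by omega, h⟩
  have hno : ∀ j, ∀ v ∈ E, ¬ (0 < projHom j v ∧ projHom j.rev v = 0) := fun j v hv h =>
    haxis ⟨j, ⟨v, hv, h⟩, fun _ => projHom_rev_nonpos_of_axis hE hpos' hv h.1 h.2⟩
  by_cases hright : ∃ c ∈ E, 0 < c.1
  · exact exists_line_of_fst_pos hE hpos (fun v hv h => hno 0 v hv h) hright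
  · push Not at hright
    exact exists_line_of_fst_nonpos hE hK (fun v hv h => hno 1 v hv h.symm) hright

end Cones

/-! ### The graphs of a 2-VASS -/

section Graphs

variable {n : ℕ} {V : VASS n} {G : Type*} [AddCommGroup G] {φ : Vec2 →+ G} {p q : Fin n}
  {u : Vec2} {c : Fin n × Vec2} {t : Transition n} {π γ : List (Transition n)} {L L' : ℕ}

lemma effect_append (π γ : List (Transition n)) : effect (π ++ γ) = effect π + effect γ := by
  simp only [effect, List.map_append, List.sum_append]

lemma effect_cons (t : Transition n) (π : List (Transition n)) :
    effect (t :: π) = t.2.1 + effect π :=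
  List.sum_cons

lemma effect_replicate_flatten (k : ℕ) (π : List (Transition n)) :
    effect (List.replicate k π).flatten = k • effect π := by
  induction k with
  | zero => exact (zero_nsmul _).symm
  | succ k ih => rw [List.replicate_succ, List.flatten_cons, effect_append, ih, succ_nsmul']

lemma map_effect (φ : Vec2 →+ G) (π : List (Transition n)) :
    φ (effect π) = (π.map fun t => φ t.2.1).sum := by
  rw [effect, map_list_sum, List.map_map]
  rfl

lemma vnorm_le_vassNorm (ht : t ∈ V) : vnorm t.2.1 ≤ vassNorm V :=
  Finset.le_sup (f := fun t : Transition n => vnorm t.2.1) ht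

lemma vnorm_effect_le (hπ : ∀ t ∈ π, t ∈ V) : vnorm (effect π) ≤ π.length * vassNorm V := by
  induction π with
  | nil => exact Nat.zero_le _
  | cons t π ih =>
    rw [List.forall_mem_cons] at hπ
    rw [effect_cons, List.length_cons, add_one_mul]
    linarith [vnorm_add_le t.2.1 (effect π), vnorm_le_vassNorm hπ.1, ih hπ.2]

lemma stateAt_cons_succ (t : Transition n) (π : List (Transition n)) (q : Fin n) (i : ℕ) :
    stateAt (t :: π) q (i + 1) = stateAt π t.2.2 i := by
  rw [stateAt, stateAt, List.take_succ_cons, List.getLast?_cons]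
  cases (π.take i).getLast? <;> rfl

lemma vecAt_cons_succ (t : Transition n) (π : List (Transition n)) (u : Vec2) (i : ℕ) :
    vecAt (t :: π) u (i + 1) = vecAt π (u + t.2.1) i := by
  rw [vecAt, vecAt, List.take_succ_cons, effect_cons, add_assoc]

/-- The edges of the control graph of `V`: the transition `t` of `V` leads from `p` to `q`. -/
def stateEdge (V : VASS n) (p : Fin n) (t : Transition n) (q : Fin n) : Prop :=
  t ∈ V ∧ t.1 = p ∧ t.2.2 = q

/-- The edges of the configuration graph of `V` when its counters are only observed through `φ`,
for instance through one coordinate. Counter values may be negative. -/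
def counterEdge (V : VASS n) (φ : Vec2 →+ G) (a : Fin n × G) (t : Transition n)
    (b : Fin n × G) : Prop :=
  stateEdge V a.1 t b.1 ∧ b.2 = a.2 + φ t.2.1

/-- The edges of the configuration graph of `V`. The nonnegativity of configurations is not built
in: it is imposed by the vertex set of a walk. -/
abbrev configEdge (V : VASS n) : Fin n × Vec2 → Transition n → Fin n × Vec2 → Prop :=
  counterEdge V (AddMonoidHom.id Vec2)

namespace Walk

lemma toState {s : Set (Fin n × G)} {S : Set (Fin n)} {a b : Fin n × G}
    (hs : ∀ c ∈ s, c.1 ∈ S) (h : Walk (counterEdge V φ) s a π b) :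
    Walk (stateEdge V) S a.1 π b.1 :=
  h.map Prod.fst (fun _ _ _ => And.left) hs

lemma observe {s : Set (Fin n × Vec2)} {a b : Fin n × Vec2} (φ : Vec2 →+ G)
    (h : Walk (configEdge V) s a π b) :
    Walk (counterEdge V φ) (Prod.map id φ '' s) (a.1, φ a.2) π (b.1, φ b.2) :=
  h.map (Prod.map id φ) (fun a t b hab => ⟨hab.1, by simp [hab.2]⟩) (Set.mapsTo_image _ _)

lemma counter_eq {s : Set (Fin n × G)} {a b : Fin n × G} (h : Walk (counterEdge V φ) s a π b) :
    b.2 = a.2 + φ (effect π) := by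
  induction h with
  | nil => simp [effect]
  | cons _ hab _ ih => rw [ih, hab.2, effect_cons, map_add, add_assoc]

lemma of_isPath {s : Set (Fin n × Vec2)} (hπ : IsPath V π) (hq : startsAt π q)
    (hs : ∀ i ≤ π.length, (stateAt π q i, vecAt π u i) ∈ s) :
    Walk (configEdge V) s (q, u) π (endState π q, vecAt π u π.length) := by
  have hu : vecAt π u 0 = u := add_zero u
  have hmem : (q, u) ∈ s := hu ▸ hs 0 (Nat.zero_le _)
  induction π generalizing q u with
  | nil => exact hu.symm ▸ nil hmem
  | cons t π ih =>
    obtain ⟨hmemV, hchain⟩ := hπ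
    rw [List.forall_mem_cons] at hmemV
    replace hchain := List.isChain_cons.1 hchain
    have hs' : ∀ i ≤ π.length, (stateAt π t.2.2 i, vecAt π (u + t.2.1) i) ∈ s := fun i hi => by
      simpa only [stateAt_cons_succ, vecAt_cons_succ] using hs (i + 1) (Nat.succ_le_succ hi)
    have hu' : vecAt π (u + t.2.1) 0 = u + t.2.1 := add_zero _
    have h := ih ⟨hmemV.2, hchain.2⟩ (fun r hr => (hchain.1 r hr).symm) hs' hu'
      (hu' ▸ hs' 0 (Nat.zero_le _))
    rw [endState, List.length_cons, stateAt_cons_succ, vecAt_cons_succ]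
    exact cons hmem ⟨⟨hmemV.1, hq t rfl, rfl⟩, rfl⟩ h

section State

variable {S : Set (Fin n)}

lemma startsAt (h : Walk (stateEdge V) S p π q) : startsAt π p := by
  cases h with
  | nil => exact fun _ ht => nomatch ht
  | cons _ hab _ => exact fun _ ht => Option.mem_some.1 ht ▸ hab.2.1

lemma endsAt (h : Walk (stateEdge V) S p π q) : ∀ t ∈ π.getLast?, t.2.2 = q := by
  induction h with
  | nil => exact fun _ ht => nomatch ht
  | @cons _ t _ π _ _ hab h ih =>
    cases h with
    | nil => exact fun _ ht => Option.mem_some.1 ht ▸ hab.2.2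
    | cons => simpa only [List.getLast?_cons_cons] using ih

lemma forall_mem (h : Walk (stateEdge V) S p π q) : ∀ t ∈ π, t ∈ V :=
  h.forall_label fun _ _ _ => And.left

lemma isPath (h : Walk (stateEdge V) S p π q) : IsPath V π := by
  refine ⟨h.forall_mem, ?_⟩
  induction h with
  | nil => exact List.isChain_nil
  | cons _ hab h ih =>
    exact List.isChain_cons.2 ⟨fun t ht => hab.2.2.trans (h.startsAt t ht).symm, ih⟩

lemma isCycle (h : Walk (stateEdge V) S p π p) (hne : π ≠ []) : IsCycle V π := by
  refine ⟨h.isPath, hne, ?_⟩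
  rw [List.head?_eq_some_head hne, List.getLast?_eq_some_getLast hne]
  exact congrArg some ((h.startsAt _ (List.head?_eq_some_head hne)).trans
    (h.endsAt _ (List.getLast?_eq_some_getLast hne)).symm)

end State

end Walk

/-- The configuration `c` enables a semi-positive cycle of length at most `L`. -/
def Pumpable (V : VASS n) (L : ℕ) (c : Fin n × Vec2) : Prop :=
  ∃ γ, IsCycle V γ ∧ Enabled γ c.1 c.2 ∧ SemiPos (effect γ) ∧ γ.length ≤ L

namespace Pumpable

lemma of_walk {S : Set (Fin n)} (h : Walk (stateEdge V) S c.1 γ c.1)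
    (hnonneg : ∀ i ≤ γ.length, 0 ≤ vecAt γ c.2 i) (hγ : SemiPos (effect γ)) (hL : γ.length ≤ L) :
    Pumpable V L c := by
  have hne : γ ≠ [] := by
    rintro rfl
    simp [SemiPos, effect] at hγ
  exact ⟨γ, h.isCycle hne, ⟨h.startsAt, hnonneg⟩, hγ, hL⟩

end Pumpable

lemma projHom_vecAt_nonneg (hπ : ∀ t ∈ π, t ∈ V) (hL : π.length ≤ L) {j : Fin 2}
    (hu : (L * vassNorm V : ℤ) ≤ projHom j u) {i : ℕ} : 0 ≤ projHom j (vecAt π u i) := by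
  have hlen : (π.take i).length ≤ L := (List.length_take_le' _ _).trans hL
  have heff : vnorm (effect (π.take i)) ≤ L * vassNorm V :=
    (vnorm_effect_le fun t ht => hπ t (List.mem_of_mem_take ht)).trans
      (Nat.mul_le_mul_right _ hlen)
  have := neg_vnorm_le_projHom j (effect (π.take i))
  rw [vecAt, map_add]
  zify at heff
  linarith

/-- The configurations with state in `S` and nonnegative counters in which no semi-positive cycle
of length at most `L` is enabled. -/
def unpumpable (V : VASS n) (L : ℕ) (S : Set (Fin n)) : Set (Fin n × Vec2) :=
  {c | c.1 ∈ S ∧ 0 ≤ c.2 ∧ ¬ Pumpable V L c}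

end Graphs

/-! ### Runs along an axis -/

section Belt

variable {n L B : ℕ} {V : VASS n} {S : Set (Fin n)} {s : Set (Fin n × Vec2)} {a b : Fin n × Vec2}
  {t : Transition n} {γ π : List (Transition n)} {j : Fin 2}

lemma projHom_le_of_configEdge (h : configEdge V a t b) (j : Fin 2) :
    projHom j b.2 ≤ projHom j a.2 + vassNorm V := by
  have ht : (vnorm t.2.1 : ℤ) ≤ vassNorm V := by exact_mod_cast vnorm_le_vassNorm h.1.1
  rw [h.2, AddMonoidHom.id_apply, map_add]
  linarith [projHom_le_vnorm j t.2.1]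

lemma projHom_effect_nonpos_of_belt {T : Set (Fin n × ℤ)} (hT : ∀ e ∈ T, 0 ≤ e.2)
    (ha : a ∈ unpumpable V L S) (haj : (L * vassNorm V : ℤ) ≤ projHom j a.2)
    (h : Walk (counterEdge V (projHom j.rev)) T (a.1, projHom j.rev a.2) γ
      (a.1, projHom j.rev a.2))
    (hγ : γ.length ≤ L) : projHom j (effect γ) ≤ 0 := by
  by_contra! hpos
  have hstate := h.toState (S := Set.univ) fun _ _ => Set.mem_univ _
  have hrev : projHom j.rev (effect γ) = 0 := left_eq_add.1 h.counter_eq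
  refine ha.2.2 (.of_walk hstate (fun i _ => ?_) (semiPos_of_projHom hpos hrev.ge) hγ)
  rw [nonneg_iff_forall_projHom, forall_fin_two_iff_rev j]
  refine ⟨projHom_vecAt_nonneg hstate.forall_mem hγ haj, ?_⟩
  obtain ⟨e, he, -⟩ := h.exists_take i
  rw [vecAt, map_add, ← he.counter_eq]
  exact hT e he.target_mem

/-- The pairs of a control state and a value of the coordinate `j.rev` form a finite graph on which
a short cycle cannot increase the coordinate `j`. -/
lemma projHom_le_of_belt_of_high (hB : n * B ≤ L) (hs : s ⊆ unpumpable V L S)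
    (hhigh : ∀ c ∈ s, (L * vassNorm V : ℤ) ≤ projHom j c.2)
    (hbelt : ∀ c ∈ s, projHom j.rev c.2 < B) (h : Walk (configEdge V) s a π b) :
    projHom j b.2 ≤ projHom j a.2 + L * vassNorm V := by
  have hsub : Prod.map id (projHom j.rev) '' s ⊆
      ((Finset.univ ×ˢ Finset.Ico 0 (B : ℤ) : Finset (Fin n × ℤ)) : Set (Fin n × ℤ)) := by
    rintro _ ⟨c, hc, rfl⟩
    simpa using ⟨nonneg_iff_forall_projHom.1 (hs hc).2.1 j.rev, hbelt c hc⟩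
  obtain ⟨T, hT⟩ := ((Finset.finite_toSet _).subset hsub).exists_finset_coe
  have hcard : T.card ≤ L := by
    rw [← hT, Finset.coe_subset] at hsub
    exact (Finset.card_le_card hsub).trans (by simpa using hB)
  have hTpos : ∀ e ∈ (T : Set (Fin n × ℤ)), 0 ≤ e.2 := by
    rw [hT]
    rintro _ ⟨c, hc, rfl⟩
    exact nonneg_iff_forall_projHom.1 (hs hc).2.1 j.rev
  have hobs := h.observe (projHom j.rev)
  rw [← hT] at hobs
  have hsum := hobs.sum_map_le (w := fun t => projHom j t.2.1) (W := (vassNorm V : ℤ))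
    (by positivity)
    (fun _ t _ ht => (projHom_le_vnorm j _).trans (by exact_mod_cast vnorm_le_vassNorm ht.1.1))
    (fun e γ hγ hlen => by
      obtain ⟨c, hc, rfl⟩ : e ∈ Prod.map id (projHom j.rev) '' s := hT ▸ hγ.source_mem
      rw [← map_effect]
      exact projHom_effect_nonpos_of_belt hTpos (hs hc) (hhigh c hc) hγ (hlen.trans hcard))
  rw [← map_effect, nsmul_eq_mul] at hsum
  rw [h.counter_eq, AddMonoidHom.id_apply, map_add]
  gcongr
  exact hsum.trans (by gcongr)

lemma projHom_le_of_belt (hB : n * B ≤ L) (hs : s ⊆ unpumpable V L S)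
    (hbelt : ∀ c ∈ s, (L * vassNorm V : ℤ) ≤ projHom j c.2 → projHom j.rev c.2 < B)
    (h : Walk (configEdge V) s a π b) :
    projHom j b.2 ≤ projHom j a.2 + 2 * (L * vassNorm V) + vassNorm V := by
  have ha : 0 ≤ projHom j a.2 := nonneg_iff_forall_projHom.1 (hs h.source_mem).2.1 j
  have hLM : (0 : ℤ) ≤ L * vassNorm V := by positivity
  have htail : ∀ {c π}, Walk (configEdge V) (s \ {c | projHom j c.2 < L * vassNorm V}) c π b →
      projHom j b.2 ≤ projHom j c.2 + L * vassNorm V :=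
    projHom_le_of_belt_of_high hB (Set.sdiff_subset.trans hs) (fun c hc => not_lt.1 hc.2)
      fun c hc => hbelt c hc.1 (not_lt.1 hc.2)
  obtain h | ⟨c, hc, -, -, rfl | ⟨t, d, π', hcd, h⟩⟩ :=
    h.avoids_or_exists_last {c | projHom j c.2 < L * vassNorm V}
  · linarith [htail h]
  · linarith [hc.out]
  · linarith [htail h, projHom_le_of_configEdge hcd j, hc.out]

end Belt

/-! ### Growth of runs -/

section Growth

variable {n L K D : ℕ} {V : VASS n} {S : Finset (Fin n)} {s : Set (Fin n × Vec2)}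
  {a b : Fin n × Vec2} {t : Transition n} {π : List (Transition n)} {j : Fin 2} {p : Fin n}

/-- The effects of the cycles of length at most `n` with states in `S`. -/
def shortCycleEffects (V : VASS n) (S : Set (Fin n)) : Set Vec2 :=
  {v | ∃ r γ, Walk (stateEdge V) S r γ r ∧ γ.length ≤ n ∧ effect γ = v}

lemma vnorm_le_of_mem_shortCycleEffects {S : Set (Fin n)} {v : Vec2}
    (hv : v ∈ shortCycleEffects V S) : vnorm v ≤ n * vassNorm V := by
  obtain ⟨r, γ, hγ, hlen, rfl⟩ := hv
  exact (vnorm_effect_le hγ.forall_mem).trans (Nat.mul_le_mul_right _ hlen)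

lemma map_le_of_shortCycleEffects_nonpos {w : Vec2 →+ ℤ} {W : ℤ} (hW : 0 ≤ W)
    (hw : ∀ t ∈ V, w t.2.1 ≤ W) (hcycle : ∀ v ∈ shortCycleEffects V S, w v ≤ 0)
    (hs : s ⊆ unpumpable V L S) (h : Walk (configEdge V) s a π b) :
    w b.2 ≤ w a.2 + n * W := by
  have hcard : S.card ≤ n := S.card_le_univ.trans_eq (Fintype.card_fin n)
  have hsum := (h.toState fun c hc => (hs hc).1).sum_map_le (w := fun t => w t.2.1) hW
    (fun _ t _ ht => hw t ht.1)
    (fun r γ hγ hlen => by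
      rw [← map_effect]
      exact hcycle _ ⟨r, γ, hγ, hlen.trans hcard, rfl⟩)
  rw [← map_effect, nsmul_eq_mul] at hsum
  rw [h.counter_eq, AddMonoidHom.id_apply, map_add]
  gcongr
  exact hsum.trans (by gcongr)

/-- The exponential bound on the growth of the runs in `S` that visit no pumpable configuration.
The additive constants `D` and `2 * D` make the bounds for two disjoint sets of states multiply
when a run passes from one to the other. -/
def HasGrowthBound (V : VASS n) (L D K : ℕ) (S : Finset (Fin n)) : Prop :=
  ∀ a π b, Walk (configEdge V) (unpumpable V L S) a π b →
    vnorm b.2 + 2 * D ≤ (2 * K + 3) ^ S.card * (vnorm a.2 + D)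

lemma vnorm_le_of_configEdge (h : configEdge V a t b) :
    vnorm b.2 ≤ vnorm a.2 + vassNorm V := by
  rw [h.2, AddMonoidHom.id_apply]
  exact (vnorm_add_le _ _).trans (Nat.add_le_add_left (vnorm_le_vassNorm h.1.1) _)

namespace HasGrowthBound

lemma of_linear (h : ∀ a π b, Walk (configEdge V) (unpumpable V L S) a π b →
    vnorm b.2 ≤ (2 * K + 1) * vnorm a.2 + D) : HasGrowthBound V L D K S := by
  intro a π b hab
  have hS : S.card ≠ 0 := Finset.card_ne_zero_of_mem hab.source_mem.1
  calc vnorm b.2 + 2 * D ≤ (2 * K + 1) * vnorm a.2 + D + 2 * D := by gcongr; exact h a π b hab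
    _ ≤ (2 * K + 3) * (vnorm a.2 + D) := by nlinarith
    _ ≤ (2 * K + 3) ^ S.card * (vnorm a.2 + D) := by gcongr; exact Nat.le_self_pow hS _

lemma of_line (hnM : n * vassNorm V ≤ K) (hD : 2 * K ^ 2 ≤ D) {x y : ℤ} (hx : x ∈ Set.Icc 1 (K : ℤ))
    (hy : y ∈ Set.Icc 1 (K : ℤ)) (hcycle : ∀ v ∈ shortCycleEffects V S, x * v.1 + y * v.2 ≤ 0) :
    HasGrowthBound V L D K S := by
  refine of_linear fun a π b h => ?_
  obtain ⟨hx₁, hxK⟩ := hx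
  obtain ⟨hy₁, hyK⟩ := hy
  have hle : ∀ v : Vec2, x * v.1 + y * v.2 ≤ 2 * K * vnorm v := fun v => by
    have h₁ := projHom_le_vnorm 0 v
    have h₂ := projHom_le_vnorm 1 v
    simp only [projHom_zero_apply, projHom_one_apply] at h₁ h₂
    nlinarith
  have hrun := map_le_of_shortCycleEffects_nonpos (w := x • projHom 0 + y • projHom 1)
    (W := 2 * K * vassNorm V) (by positivity)
    (fun t ht => (hle t.2.1).trans (by gcongr; exact vnorm_le_vassNorm ht))
    hcycle subset_rfl h
  simp only [AddMonoidHom.add_apply, AddMonoidHom.smul_apply, projHom_zero_apply,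
    projHom_one_apply, smul_eq_mul] at hrun
  have hb : (vnorm b.2 : ℤ) ≤ x * b.2.1 + y * b.2.2 := by
    obtain ⟨hb₁, hb₂⟩ := h.target_mem.2.1
    simp only [Prod.fst_zero, Prod.snd_zero] at hb₁ hb₂
    rw [vnorm_le_iff_of_nonneg h.target_mem.2.1, Fin.forall_fin_two]
    constructor <;> simp only [projHom_zero_apply, projHom_one_apply] <;> nlinarith
  have ha := hle a.2
  zify at hnM hD ⊢
  nlinarith

/-- Since `T` is closed, a run splits into a part that avoids `T` and a part that stays in `T`. -/
lemma of_closed {T : Finset (Fin n)} (hT : T ⊆ S) (hM : vassNorm V ≤ D)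
    (hclosed : ∀ p ∈ T, ∀ π q, Walk (stateEdge V) S p π q → q ∈ T)
    (hbound : HasGrowthBound V L D K T) (hbound' : HasGrowthBound V L D K (S \ T)) :
    HasGrowthBound V L D K S := by
  intro a π b h
  have hq : 1 ≤ 2 * K + 3 := by omega
  have hstay : ∀ {c π}, c.1 ∈ T → Walk (configEdge V) (unpumpable V L S) c π b →
      vnorm b.2 + 2 * D ≤ (2 * K + 3) ^ T.card * (vnorm c.2 + D) := fun hc hcb =>
    hbound _ _ _ (hcb.of_forall_reachable fun π d hcd =>
      ⟨hclosed _ hc π _ (hcd.toState fun _ he => he.1), hcd.target_mem.2⟩)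
  have havoid : unpumpable V L S \ {c | c.1 ∈ T} ⊆ unpumpable V L ↑(S \ T) := fun c hc =>
    ⟨Finset.mem_coe.2 (Finset.mem_sdiff.2 ⟨hc.1.1, hc.2⟩), hc.1.2⟩
  obtain h | ⟨c, hc, -, π', -, -, hcb, rfl | ⟨d, t, π₀, had, hdc⟩⟩ :=
    h.avoids_or_exists_first {c | c.1 ∈ T}
  · exact (hbound' a π b (h.mono havoid)).trans
      (Nat.mul_le_mul_right _ (Nat.pow_le_pow_right hq (Finset.card_le_card Finset.sdiff_subset)))
  · exact (hstay hc hcb).trans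
      (Nat.mul_le_mul_right _ (Nat.pow_le_pow_right hq (Finset.card_le_card hT)))
  calc vnorm b.2 + 2 * D ≤ (2 * K + 3) ^ T.card * (vnorm c.2 + D) := hstay hc hcb
    _ ≤ (2 * K + 3) ^ T.card * (vnorm d.2 + 2 * D) := by
        have := vnorm_le_of_configEdge hdc
        exact Nat.mul_le_mul_left _ (by omega)
    _ ≤ (2 * K + 3) ^ T.card * ((2 * K + 3) ^ (S \ T).card * (vnorm a.2 + D)) := by
        gcongr
        exact hbound' a π₀ d (had.mono havoid)
    _ = (2 * K + 3) ^ S.card * (vnorm a.2 + D) := by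
        rw [← mul_assoc, ← pow_add, Nat.add_comm T.card, Finset.card_sdiff_add_card_eq_card hT]

end HasGrowthBound

lemma StronglyConnected.exists_length_le {q : Fin n}
    (h : StronglyConnected (stateEdge V) (S : Set (Fin n))) (hp : p ∈ S) (hq : q ∈ S) :
    ∃ π, Walk (stateEdge V) S p π q ∧ π.length ≤ n := by
  obtain ⟨π, hπ⟩ := h p hp q hq
  obtain ⟨π', hπ', hlen⟩ := hπ.exists_length_le_card
  exact ⟨π', hπ', hlen.trans (S.card_le_univ.trans_eq (Fintype.card_fin n))⟩

/-- Repeating the two short cycles often enough outweighs the connecting paths. -/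
lemma exists_pos_cycle_of_hasPosCombination
    (hSC : StronglyConnected (stateEdge V) (S : Set (Fin n))) (hn : n ≤ K)
    (hnM : n * vassNorm V ≤ K) (hE : HasPosCombination (shortCycleEffects V S) (2 * K))
    (hp : p ∈ S) :
    ∃ π, Walk (stateEdge V) S p π p ∧ Pos (effect π) ∧ π.length ≤ 19 * K ^ 3 := by
  obtain ⟨_, ⟨q, γ, hγ, hγn, rfl⟩, _, ⟨r, δ, hδ, hδn, rfl⟩, i, hi, j, hj, hpos⟩ := hE
  obtain ⟨π₁, h₁, hn₁⟩ := hSC.exists_length_le hp hγ.source_mem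
  obtain ⟨π₂, h₂, hn₂⟩ := hSC.exists_length_le hγ.source_mem hδ.source_mem
  obtain ⟨π₃, h₃, hn₃⟩ := hSC.exists_length_le hδ.source_mem hp
  set N := 3 * K + 1 with hN
  have hcycle := h₁.append ((hγ.replicate (N * i)).append
    (h₂.append ((hδ.replicate (N * j)).append h₃)))
  refine ⟨_, hcycle, ?_, ?_⟩
  · have hlinks : vnorm (effect (π₁ ++ π₂ ++ π₃)) < N := by
      refine Nat.lt_succ_of_le ((vnorm_effect_le ((h₁.append h₂).append h₃).forall_mem).trans ?_)
      simp only [List.length_append]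
      nlinarith
    convert pos_add_nsmul_of_vnorm_lt hpos hlinks using 1
    simp only [effect_append, effect_replicate_flatten, mul_nsmul', nsmul_add]
    abel
  · simp only [List.length_append, List.length_flatten, List.map_replicate, List.sum_replicate,
      smul_eq_mul]
    have hγlen : N * i * γ.length ≤ N * (2 * K) * K := by gcongr; exact hγn.trans hn
    have hδlen : N * j * δ.length ≤ N * (2 * K) * K := by gcongr; exact hδn.trans hn
    have hK : K ≤ K ^ 3 := Nat.le_self_pow three_ne_zero K
    have hK' : K ^ 2 ≤ K ^ 3 := Nat.pow_le_pow_right ((Fin.pos p).trans_le hn) (by norm_num)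
    rw [hN] at hγlen hδlen ⊢
    nlinarith

lemma vassNorm_le_of_mul_le (p : Fin n) (hnM : n * vassNorm V ≤ K) : vassNorm V ≤ K :=
  (Nat.le_mul_of_pos_left _ (Fin.pos p)).trans hnM

lemma HasGrowthBound.of_hasPosCombination
    (hSC : StronglyConnected (stateEdge V) (S : Set (Fin n))) (hn : n ≤ K)
    (hnM : n * vassNorm V ≤ K) (hL : 19 * K ^ 4 ≤ L) (hD : 2 * L * K + K ≤ D)
    (hE : HasPosCombination (shortCycleEffects V S) (2 * K)) : HasGrowthBound V L D K S := by
  refine of_linear fun a π b h => ?_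
  have hM : vassNorm V ≤ K := vassNorm_le_of_mul_le a.1 hnM
  have hcycle_le : 19 * K ^ 3 ≤ L := by
    have : K ^ 3 ≤ K ^ 4 := Nat.pow_le_pow_right ((Fin.pos a.1).trans_le hn) (by norm_num)
    omega
  have hB : n * (19 * K ^ 3 * vassNorm V) ≤ L := by
    calc n * (19 * K ^ 3 * vassNorm V) = 19 * K ^ 3 * (n * vassNorm V) := by ring
      _ ≤ 19 * K ^ 3 * K := by gcongr
      _ ≤ L := by linarith
  have hbelt : ∀ j, ∀ c ∈ unpumpable V L S, (L * vassNorm V : ℤ) ≤ projHom j c.2 →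
      projHom j.rev c.2 < (19 * K ^ 3 * vassNorm V : ℕ) := fun j c hc hcj => by
    by_contra! hcj'
    obtain ⟨γ, hγ, hpos, hlen⟩ := exists_pos_cycle_of_hasPosCombination hSC hn hnM hE hc.1
    refine hc.2.2 (.of_walk hγ (fun i _ => ?_) (semiPos_of_pos hpos) (hlen.trans hcycle_le))
    rw [nonneg_iff_forall_projHom, forall_fin_two_iff_rev j]
    exact ⟨projHom_vecAt_nonneg hγ.forall_mem (hlen.trans hcycle_le) hcj,
      projHom_vecAt_nonneg hγ.forall_mem hlen (by exact_mod_cast hcj')⟩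
  have hb : (vnorm b.2 : ℤ) ≤ vnorm a.2 + 2 * (L * vassNorm V) + vassNorm V :=
    (vnorm_le_iff_of_nonneg h.target_mem.2.1).2 fun j =>
      (projHom_le_of_belt hB subset_rfl (hbelt j) h).trans (by gcongr; exact projHom_le_vnorm j _)
  norm_cast at hb
  nlinarith

section Axis

variable {r : Fin n}

lemma projHom_lt_of_axis_cycle {S : Set (Fin n)} {γ : List (Transition n)} {c : Fin n × Vec2}
    (hnM : n * vassNorm V ≤ K) (hnL : n ≤ L) (hγ : Walk (stateEdge V) S c.1 γ c.1)
    (hlen : γ.length ≤ n) (hpos : 0 < projHom j (effect γ)) (hzero : projHom j.rev (effect γ) = 0)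
    (hc : c ∈ unpumpable V L S) (hrev : (K : ℤ) ≤ projHom j.rev c.2) : projHom j c.2 < K := by
  by_contra! hcj
  have hnK : (n * vassNorm V : ℤ) ≤ K := by exact_mod_cast hnM
  refine hc.2.2 (.of_walk hγ (fun i _ => ?_) (semiPos_of_projHom hpos hzero.ge) (hlen.trans hnL))
  rw [nonneg_iff_forall_projHom, forall_fin_two_iff_rev j]
  exact ⟨projHom_vecAt_nonneg hγ.forall_mem hlen (hnK.trans hcj),
    projHom_vecAt_nonneg hγ.forall_mem hlen (hnK.trans hrev)⟩

lemma projHom_le_add_of_shortCycleEffects_nonpos (hnM : n * vassNorm V ≤ K)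
    (hcycle : ∀ v ∈ shortCycleEffects V S, projHom j v ≤ 0) (hs : s ⊆ unpumpable V L S)
    (h : Walk (configEdge V) s a π b) : projHom j b.2 ≤ projHom j a.2 + K := by
  refine (map_le_of_shortCycleEffects_nonpos (Nat.cast_nonneg (vassNorm V)) (fun t ht =>
    (projHom_le_vnorm j _).trans (by exact_mod_cast vnorm_le_vassNorm ht)) hcycle hs h).trans ?_
  gcongr
  exact_mod_cast hnM

/-- After the last visit to a configuration whose coordinate `j` is small, the run avoids `r`. -/
lemma vnorm_le_of_rev_high (hnM : n * vassNorm V ≤ K)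
    (hr : ∀ c ∈ unpumpable V L S, c.1 = r → (K : ℤ) ≤ projHom j.rev c.2 → projHom j c.2 < K)
    (hcycle : ∀ v ∈ shortCycleEffects V S, projHom j.rev v ≤ 0)
    (hbound : HasGrowthBound V L D K (S.erase r))
    (h : Walk (configEdge V) (unpumpable V L S \ {c | projHom j.rev c.2 < K}) a π b) :
    vnorm b.2 ≤ (2 * K + 3) ^ (S.erase r).card * (vnorm a.2 + 2 * K + D) := by
  have hM : (vassNorm V : ℤ) ≤ K := by exact_mod_cast vassNorm_le_of_mul_le r hnM
  have havoid : (unpumpable V L S \ {c | projHom j.rev c.2 < K}) \ {c | projHom j c.2 < K} ⊆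
      unpumpable V L ↑(S.erase r) := fun c ⟨⟨hc, hrev⟩, hcj⟩ =>
    ⟨Finset.mem_coe.2 (Finset.mem_erase.2 ⟨fun hcr => hcj (hr c hc hcr (not_lt.1 hrev)), hc.1⟩),
      hc.2⟩
  have hnear : ∀ d : Fin n × Vec2, 0 ≤ d.2 → projHom j d.2 ≤ 2 * K →
      projHom j.rev d.2 ≤ projHom j.rev a.2 + 2 * K → vnorm d.2 ≤ vnorm a.2 + 2 * K := by
    intro d hd hdj hdj'
    zify
    rw [vnorm_le_iff_of_nonneg hd, forall_fin_two_iff_rev j]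
    constructor <;> linarith [projHom_le_vnorm j.rev a.2]
  have htail : ∀ {d π}, vnorm d.2 ≤ vnorm a.2 + 2 * K →
      Walk (configEdge V) (unpumpable V L ↑(S.erase r)) d π b →
      vnorm b.2 ≤ (2 * K + 3) ^ (S.erase r).card * (vnorm a.2 + 2 * K + D) := fun hd hdb =>
    (Nat.le_add_right _ _).trans ((hbound _ _ _ hdb).trans (by gcongr))
  obtain h | ⟨c, hc, π₁, hac, hlast⟩ := h.avoids_or_exists_last {c | projHom j c.2 < K}
  · exact htail (Nat.le_add_right _ _) (h.mono havoid)
  have hcj : projHom j c.2 < K := hc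
  have hcj' := projHom_le_add_of_shortCycleEffects_nonpos hnM hcycle Set.sdiff_subset hac
  obtain rfl | ⟨t, d, π₂, hcd, hdb⟩ := hlast
  · have hc := hnear c hac.target_mem.1.2.1 (by linarith) (by linarith)
    exact (hc.trans (Nat.le_add_right _ _)).trans (Nat.le_mul_of_pos_left _ (by positivity))
  · refine htail (hnear d hdb.source_mem.1.1.2.1 ?_ ?_) (hdb.mono havoid)
    · linarith [projHom_le_of_configEdge hcd j]
    · linarith [projHom_le_of_configEdge hcd j.rev]

lemma vnorm_le_of_rev_low (hnM : n * vassNorm V ≤ K) (hB : n * (2 * K) ≤ L)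
    (hcycle : ∀ v ∈ shortCycleEffects V S, projHom j.rev v ≤ 0)
    (ha : projHom j.rev a.2 < K) (h : Walk (configEdge V) (unpumpable V L S) a π b) :
    vnorm b.2 ≤ vnorm a.2 + 2 * (L * K) + K := by
  have hM : vassNorm V ≤ K := vassNorm_le_of_mul_le a.1 hnM
  have hrev {l c} (hac : Walk (configEdge V) (unpumpable V L S) a l c) :
      projHom j.rev c.2 ≤ projHom j.rev a.2 + K :=
    projHom_le_add_of_shortCycleEffects_nonpos hnM hcycle subset_rfl hac
  have hbelt := h.of_forall_reachable
    (s' := unpumpable V L S ∩ {c | projHom j.rev c.2 < (2 * K : ℕ)}) fun l c hac =>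
      ⟨hac.target_mem, Set.mem_ofPred.2 (by push_cast; linarith [hrev hac])⟩
  have hbj := projHom_le_of_belt hB Set.inter_subset_left (fun c hc _ => hc.2) hbelt
  have hLM : (L * vassNorm V : ℤ) ≤ L * K := by gcongr
  zify at hM ⊢
  rw [vnorm_le_iff_of_nonneg h.target_mem.2.1, forall_fin_two_iff_rev j]
  have hLK : (0 : ℤ) ≤ L * K := by positivity
  exact ⟨by linarith [projHom_le_vnorm j a.2], by linarith [hrev h, projHom_le_vnorm j.rev a.2]⟩

lemma HasGrowthBound.of_axis (hn : n ≤ K) (hnM : n * vassNorm V ≤ K) (hB : n * (2 * K) ≤ L)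
    (hD : 2 * L * K + 4 * K ≤ D) (hrS : r ∈ S)
    (hr : ∀ c ∈ unpumpable V L S, c.1 = r → (K : ℤ) ≤ projHom j.rev c.2 → projHom j c.2 < K)
    (hcycle : ∀ v ∈ shortCycleEffects V S, projHom j.rev v ≤ 0)
    (hbound : HasGrowthBound V L D K (S.erase r)) : HasGrowthBound V L D K S := by
  intro a π b h
  have hM : vassNorm V ≤ K := vassNorm_le_of_mul_le r hnM
  have hK : 1 ≤ K := (Fin.pos r).trans_le hn
  set q := (2 * K + 3) ^ (S.erase r).card with hq
  have hq₁ : 1 ≤ q := Nat.one_le_pow _ _ (by omega)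
  set N := q * (vnorm a.2 + 2 * K + D) with hN
  suffices hb : vnorm b.2 ≤ N + 2 * (L * K) + 2 * K by
    calc vnorm b.2 + 2 * D ≤ N + 1 * (2 * L * K + 2 * K + 2 * D) := by linarith
      _ ≤ N + q * (2 * L * K + 2 * K + 2 * D) := by gcongr
      _ = q * (vnorm a.2 + (2 * L * K + 4 * K) + 3 * D) := by rw [hN]; ring
      _ ≤ q * ((2 * K + 3) * (vnorm a.2 + D)) := by gcongr; nlinarith
      _ = (2 * K + 3) ^ S.card * (vnorm a.2 + D) := by
        rw [← mul_assoc, hq, ← pow_succ, Finset.card_erase_add_one hrS]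
  have haN : vnorm a.2 ≤ N :=
    ((Nat.le_add_right _ _).trans (Nat.le_add_right _ _)).trans (Nat.le_mul_of_pos_left _ hq₁)
  have hhigh : ∀ {d l}, Walk (configEdge V) (unpumpable V L S \ {c | projHom j.rev c.2 < K}) a l d →
      vnorm d.2 ≤ N := vnorm_le_of_rev_high hnM hr hcycle hbound
  obtain h | ⟨c, hc, -, π₂, -, -, hcb, hfirst⟩ :=
    h.avoids_or_exists_first {c | projHom j.rev c.2 < K}
  · linarith [hhigh h, Nat.zero_le (L * K)]
  have hcN : vnorm c.2 ≤ N + K := by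
    obtain rfl | ⟨d, t, π₀, had, hdc⟩ := hfirst
    · exact haN.trans (Nat.le_add_right _ _)
    · linarith [hhigh had, vnorm_le_of_configEdge hdc]
  linarith [vnorm_le_of_rev_low hnM hB hcycle hc hcb]

end Axis

theorem hasGrowthBound (hn : n ≤ K) (hnM : n * vassNorm V ≤ K) (hL : 19 * K ^ 4 ≤ L)
    (hD : 2 * L * K + 2 * K ^ 2 + 4 * K ≤ D) (S : Finset (Fin n)) : HasGrowthBound V L D K S := by
  induction S using Finset.strongInduction with
  | H S ih =>
  intro a π b h
  have hM : vassNorm V ≤ K := vassNorm_le_of_mul_le a.1 hnM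
  have hK : 1 ≤ K := (Fin.pos a.1).trans_le hn
  suffices HasGrowthBound V L D K S from this a π b h
  by_cases hSC : StronglyConnected (stateEdge V) (S : Set (Fin n))
  · obtain hE | ⟨j, ⟨_, ⟨r, γ, hγ, hlen, rfl⟩, hpos, hzero⟩, hcycle⟩ | ⟨x, hx, y, hy, hcycle⟩ :=
      cone_trichotomy (fun v hv => (vnorm_le_of_mem_shortCycleEffects hv).trans hnM) hK
    · exact .of_hasPosCombination hSC hn hnM hL (by omega) hE
    · have hpow : K ^ 2 ≤ K ^ 4 := Nat.pow_le_pow_right hK (by norm_num)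
      have hKL : n * (2 * K) ≤ L := by nlinarith
      have hnL : n ≤ L := by nlinarith
      refine .of_axis hn hnM hKL (by omega) hγ.source_mem ?_ hcycle
        (ih _ (Finset.erase_ssubset hγ.source_mem))
      rintro c hc rfl hrev
      exact projHom_lt_of_axis_cycle hnM hnL hγ hlen hpos hzero hc hrev
    · exact .of_line hnM (by omega) hx hy hcycle
  · obtain ⟨T, hTS, hT, hclosed⟩ := exists_closed_of_not_stronglyConnected hSC
    exact .of_closed hTS.subset (by omega) hclosed (ih T hTS)
      (ih _ (Finset.sdiff_ssubset hTS.subset hT))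

end Growth

/-! ### The polynomial bound -/

section Bound

variable {n L K D : ℕ} {V : VASS n} {π : List (Transition n)} {q : Fin n} {u : Vec2}

lemma vnorm_vecAt_length_le (hπ : ∀ t ∈ π, t ∈ V) :
    vnorm (vecAt π u π.length) ≤ vnorm u + π.length * vassNorm V := by
  rw [vecAt, List.take_length]
  exact (vnorm_add_le _ _).trans (Nat.add_le_add_left (vnorm_effect_le hπ) _)

lemma exists_pumpable_of_isRun (hn : n ≤ K) (hnM : n * vassNorm V ≤ K) (hL : 19 * K ^ 4 ≤ L)
    (hD : 2 * L * K + 2 * K ^ 2 + 4 * K ≤ D) (h : IsRun V π q u)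
    (hlarge : (2 * K + 3) ^ n * (vnorm u + D) < vnorm (vecAt π u π.length)) :
    ∃ i ≤ π.length, Pumpable V L (stateAt π q i, vecAt π u i) := by
  by_contra! hnot
  have hwalk := Walk.of_isPath (s := unpumpable V L (Finset.univ : Finset (Fin n))) h.1 h.2.1
    fun i hi => ⟨Finset.mem_coe.2 (Finset.mem_univ _), h.2.2 i hi, hnot i hi⟩
  have hbound := hasGrowthBound hn hnM hL hD Finset.univ _ _ _ hwalk
  rw [Finset.card_univ, Fintype.card_fin] at hbound
  exact absurd ((Nat.le_add_right _ _).trans hbound) (not_le.2 hlarge)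

lemma growth_le_pow (hn : 1 ≤ n) (hK : 1 ≤ K) (x : ℕ) :
    (2 * K + 3) ^ n * (x + 44 * K ^ 5) ≤ (220 * K ^ 6 + 1) ^ n * (x + 1) := by
  have hK₅ : 1 ≤ K ^ 5 := Nat.one_le_pow _ _ hK
  calc (2 * K + 3) ^ n * (x + 44 * K ^ 5) ≤ (5 * K) ^ n * (44 * K ^ 5 * (x + 1)) := by
        gcongr
        · omega
        · nlinarith
    _ ≤ (5 * K) ^ n * ((44 * K ^ 5) ^ n * (x + 1)) := by
        gcongr
        exact Nat.le_self_pow (by omega) _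
    _ = (220 * K ^ 6) ^ n * (x + 1) := by
        rw [← mul_assoc, ← mul_pow]
        ring
    _ ≤ (220 * K ^ 6 + 1) ^ n * (x + 1) := by
        gcongr
        exact Nat.le_succ _

end Bound

theorem nonneg_cycle_lemma_general :
    ∃ P : Polynomial ℕ, ∀ (n : ℕ) (V : VASS n) (π : List (Transition n)) (q : Fin n) (u : Vec2),
      IsRun V π q u →
      (P.eval (n * vassNorm V)) ^ n * (vnorm u + 1) < vnorm (vecAt π u π.length) →
      ∃ i ≤ π.length, ∃ γ : List (Transition n),
        IsCycle V γ ∧ Enabled γ (stateAt π q i) (vecAt π u i) ∧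
        SemiPos (effect γ) ∧ γ.length ≤ P.eval (n * vassNorm V) := by
  refine ⟨220 * .X ^ 6 + 1, fun n V π q u hrun hlarge => ?_⟩
  simp only [Polynomial.eval_add, Polynomial.eval_mul, Polynomial.eval_pow, Polynomial.eval_X,
    Polynomial.eval_one, Polynomial.eval_ofNat] at hlarge ⊢
  obtain hM | hM := Nat.eq_zero_or_pos (vassNorm V)
  · have hconst : vnorm (vecAt π u π.length) ≤ vnorm u := by
      simpa [hM] using vnorm_vecAt_length_le (u := u) hrun.1.1
    have hpow := Nat.one_le_pow n (220 * (n * vassNorm V) ^ 6 + 1) (Nat.succ_pos _)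
    nlinarith
  set K := n * vassNorm V
  have hK : 1 ≤ K := Nat.mul_pos (Fin.pos q) hM
  have hpow {i j : ℕ} (hij : i ≤ j) : K ^ i ≤ K ^ j := Nat.pow_le_pow_right hK hij
  obtain ⟨i, hi, γ, hγ, hen, hpos, hlen⟩ := exists_pumpable_of_isRun (K := K)
    (L := 19 * K ^ 4) (D := 44 * K ^ 5) (Nat.le_mul_of_pos_right n hM) le_rfl le_rfl
    (by nlinarith [hpow (show 2 ≤ 5 by norm_num), hpow (show 1 ≤ 5 by norm_num)]) hrun
    ((growth_le_pow (Fin.pos q) hK _).trans_lt hlarge)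
  exact ⟨i, hi, γ, hγ, hen, hpos, by linarith [hpow (show 4 ≤ 6 by norm_num)]⟩

/-- Non-negative Cycle Lemma.  There is a polynomial `P` with
natural coefficients such that every run of a 2-VASS `V` (with `n` states and
norm `M`) from a (0,0)-configuration to a target configuration of norm larger
than `P(nM)ⁿ` contains a configuration enabling a semi-positive cycle of
length at most `P(nM)`. -/
theorem nonneg_cycle_lemma :
    ∃ P : Polynomial ℕ, ∀ (n : ℕ) (V : VASS n) (π : List (Transition n)) (q : Fin n),
      IsRun V π q 0 →
      (P.eval (n * vassNorm V)) ^ n < vnorm (vecAt π 0 π.length) →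
      ∃ i ≤ π.length, ∃ γ : List (Transition n),
        IsCycle V γ ∧ Enabled γ (stateAt π q i) (vecAt π 0 i) ∧
        SemiPos (effect γ) ∧ γ.length ≤ P.eval (n * vassNorm V) := by
  obtain ⟨P, hP⟩ := nonneg_cycle_lemma_general
  exact ⟨P, fun n V π q hrun hlarge => hP n V π q 0 hrun (by simpa [vnorm] using hlarge)⟩
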